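/- Square summability of the iterate differences: if (U^{(k)})_{k≥0} and (V^{(k)})_{k≥0} are alternating-minimization iterates for f, then the series ∑_{k=0}^{∞} (‖U^{(k+1)} − U^{(k)}‖_F² + ‖V^{(k+1)} − V^{(k)}‖_F²) is finite (summable). -/

import Mathlib

open Finset Matrix

/-- Squared Frobenius norm: `frobSq X = ‖X‖_F²`. -/
noncomputable def frobSq {a b : ℕ} (X : Matrix (Fin a) (Fin b) ℝ) : ℝ :=
  ∑ i, ∑ j, (X i j) ^ 2

/-- The matrix-completion objective
`f(U,V) = (1/2)(‖U‖_F² + ‖V‖_F²) + (μ/2) ∑_{(i,j)∈Ω} ((UV − M)_{ij})² + (ν/2) ‖L(UV) − b‖²`. -/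
noncomputable def objF {m n r p : ℕ} (Ω : Finset (Fin m × Fin n)) (M : Matrix (Fin m) (Fin n) ℝ)
    (L : Matrix (Fin m) (Fin n) ℝ →ₗ[ℝ] EuclideanSpace ℝ (Fin p))
    (b : EuclideanSpace ℝ (Fin p)) (μ ν : ℝ)
    (U : Matrix (Fin m) (Fin r) ℝ) (V : Matrix (Fin r) (Fin n) ℝ) : ℝ :=
  (1 / 2) * (frobSq U + frobSq V)
    + (μ / 2) * ∑ ij ∈ Ω, ((U * V - M) ij.1 ij.2) ^ 2
    + (ν / 2) * ‖L (U * V) - b‖ ^ 2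

lemma frobSq_nonneg' {a b : ℕ} (X : Matrix (Fin a) (Fin b) ℝ) : 0 ≤ frobSq X :=
  Finset.sum_nonneg fun _ _ => Finset.sum_nonneg fun _ _ => sq_nonneg _

lemma frobSq_mid {a b : ℕ} (X Y : Matrix (Fin a) (Fin b) ℝ) :
    frobSq ((1 / 2 : ℝ) • (X + Y)) + (1 / 4) * frobSq (X - Y)
      = (1 / 2) * (frobSq X + frobSq Y) := by
  unfold frobSq
  simp only [Finset.mul_sum, ← Finset.sum_add_distrib]
  refine Finset.sum_congr rfl fun i _ => Finset.sum_congr rfl fun j _ => ?_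
  simp only [Matrix.smul_apply, Matrix.add_apply, Matrix.sub_apply, smul_eq_mul]
  ring

lemma data_mid {m n p : ℕ} (Ω : Finset (Fin m × Fin n)) (M : Matrix (Fin m) (Fin n) ℝ)
    (L : Matrix (Fin m) (Fin n) ℝ →ₗ[ℝ] EuclideanSpace ℝ (Fin p))
    (b : EuclideanSpace ℝ (Fin p)) (μ ν : ℝ) (hμ : 0 < μ) (hν : 0 < ν)
    (X Y Z : Matrix (Fin m) (Fin n) ℝ) (hZ : Z = (1 / 2 : ℝ) • (X + Y)) :
    (μ / 2) * ∑ ij ∈ Ω, ((Z - M) ij.1 ij.2) ^ 2 + (ν / 2) * ‖L Z - b‖ ^ 2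
    ≤ (1 / 2) * (((μ / 2) * ∑ ij ∈ Ω, ((X - M) ij.1 ij.2) ^ 2 + (ν / 2) * ‖L X - b‖ ^ 2)
      + ((μ / 2) * ∑ ij ∈ Ω, ((Y - M) ij.1 ij.2) ^ 2 + (ν / 2) * ‖L Y - b‖ ^ 2)) := by
  have h1 : ∑ ij ∈ Ω, ((Z - M) ij.1 ij.2) ^ 2 ≤
      (1 / 2) * (∑ ij ∈ Ω, ((X - M) ij.1 ij.2) ^ 2 + ∑ ij ∈ Ω, ((Y - M) ij.1 ij.2) ^ 2) := by
    rw [← Finset.sum_add_distrib, Finset.mul_sum]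
    refine Finset.sum_le_sum fun ij _ => ?_
    simp only [hZ, Matrix.smul_apply, Matrix.add_apply, Matrix.sub_apply, smul_eq_mul]
    nlinarith [sq_nonneg (X ij.1 ij.2 - Y ij.1 ij.2)]
  have h2 : ‖L Z - b‖ ^ 2 ≤ (1 / 2) * (‖L X - b‖ ^ 2 + ‖L Y - b‖ ^ 2) := by
    have e : L Z - b = (1 / 2 : ℝ) • ((L X - b) + (L Y - b)) := by
      rw [hZ, map_smul, map_add]
      module
    have e2 : ‖L Z - b‖ ≤ (1 / 2) * (‖L X - b‖ + ‖L Y - b‖) := by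
      rw [e, norm_smul]
      have := norm_add_le (L X - b) (L Y - b)
      norm_num
      linarith
    have := pow_le_pow_left₀ (norm_nonneg _) e2 2
    nlinarith [sq_nonneg (‖L X - b‖ - ‖L Y - b‖)]
  have h3 := mul_le_mul_of_nonneg_left h1 (by positivity : 0 ≤ μ / 2)
  have h4 := mul_le_mul_of_nonneg_left h2 (by positivity : 0 ≤ ν / 2)
  linarith

/-- Square summability of the iterate differences. -/
theorem objF_iterates_sq_summable {m n r p : ℕ} (Ω : Finset (Fin m × Fin n)) (M : Matrix (Fin m) (Fin n) ℝ)
    (L : Matrix (Fin m) (Fin n) ℝ →ₗ[ℝ] EuclideanSpace ℝ (Fin p))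
    (b : EuclideanSpace ℝ (Fin p)) (μ ν : ℝ) (hμ : 0 < μ) (hν : 0 < ν)
    (U : ℕ → Matrix (Fin m) (Fin r) ℝ) (V : ℕ → Matrix (Fin r) (Fin n) ℝ)
    (hUstep : ∀ (k : ℕ) (U' : Matrix (Fin m) (Fin r) ℝ),
      objF Ω M L b μ ν (U (k + 1)) (V k) ≤ objF Ω M L b μ ν U' (V k))
    (hVstep : ∀ (k : ℕ) (V' : Matrix (Fin r) (Fin n) ℝ),
      objF Ω M L b μ ν (U (k + 1)) (V (k + 1)) ≤ objF Ω M L b μ ν (U (k + 1)) V') :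
    Summable (fun k : ℕ => frobSq (U (k + 1) - U k) + frobSq (V (k + 1) - V k)) := by
  have hU : ∀ k, objF Ω M L b μ ν (U (k + 1)) (V k) + (1 / 4) * frobSq (U (k + 1) - U k)
      ≤ objF Ω M L b μ ν (U k) (V k) := by
    intro k
    have h := hUstep k ((1 / 2 : ℝ) • (U (k + 1) + U k))
    have hm := frobSq_mid (U (k + 1)) (U k)
    have hd := data_mid Ω M L b μ ν hμ hν (U (k + 1) * V k) (U k * V k)
      (((1 / 2 : ℝ) • (U (k + 1) + U k)) * V k) (by rw [Matrix.smul_mul, Matrix.add_mul])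
    unfold objF at *
    linarith
  have hV : ∀ k, objF Ω M L b μ ν (U (k + 1)) (V (k + 1)) + (1 / 4) * frobSq (V (k + 1) - V k)
      ≤ objF Ω M L b μ ν (U (k + 1)) (V k) := by
    intro k
    have h := hVstep k ((1 / 2 : ℝ) • (V (k + 1) + V k))
    have hm := frobSq_mid (V (k + 1)) (V k)
    have hd := data_mid Ω M L b μ ν hμ hν (U (k + 1) * V (k + 1)) (U (k + 1) * V k)
      (U (k + 1) * ((1 / 2 : ℝ) • (V (k + 1) + V k))) (by rw [Matrix.mul_smul, Matrix.mul_add])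
    unfold objF at *
    linarith
  have hpos : ∀ k, 0 ≤ objF Ω M L b μ ν (U k) (V k) := by
    intro k
    have h1 := frobSq_nonneg' (U k)
    have h2 := frobSq_nonneg' (V k)
    unfold objF
    have h3 : 0 ≤ ∑ ij ∈ Ω, ((U k * V k - M) ij.1 ij.2) ^ 2 :=
      Finset.sum_nonneg fun _ _ => sq_nonneg _
    positivity
  have hsum : ∀ N, ∑ k ∈ Finset.range N, (frobSq (U (k + 1) - U k) + frobSq (V (k + 1) - V k))
      ≤ 4 * (objF Ω M L b μ ν (U 0) (V 0) - objF Ω M L b μ ν (U N) (V N)) := by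
    intro N
    induction N with
    | zero => simp
    | succ N ih =>
      rw [Finset.sum_range_succ]
      linarith [hU N, hV N]
  refine summable_of_sum_range_le (c := 4 * objF Ω M L b μ ν (U 0) (V 0))
    (fun k => add_nonneg (frobSq_nonneg' _) (frobSq_nonneg' _)) fun N => ?_
  linarith [hsum N, hpos N]
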